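/- arXiv:math/0103074 — 4 statements merged into one kernel-verified Lean document; each statement's English description precedes it below -/
import Mathlib

section
/- Let h ≥ 1 be an integer, let n₁, …, n_h be positive integers, let d = n₁ + ⋯ + n_h, and for a real number a define C₀(a) = (a(1−a))^{h−1} · ∏_{i=1}^{h} ( ∏_{j=1}^{n_i−1} (j − n_i a) / (n_i − 1)! ) · d^{h−3} (where d^{h−3} is the real number d raised to the possibly negative integer power h−3). Then: (i) for every real a, C₀(1−a) = (−1)^{d−h} C₀(a); and (ii) if a is a positive integer, then (−1)^{d−h} C₀(a) = C₀(1−a) = (a(1−a))^{h−1} · ∏_{i=1}^{h} binom(n_i a − 1, n_i − 1) · d^{h−3}, where binom denotes the binomial coefficient. -/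
/-!
Up to `(n - 1)!`, the contribution of a boundary component of winding number `n` is the rising
factorial of length `n - 1` starting at `1 - n a`. Replacing `a` by `1 - a` moves the starting
point to `n a - (n - 1)`, so the factors are those of the falling factorial of `n a - 1`; read
backwards, they are the negatives of the original ones. This gives the sign `(-1) ^ (n - 1)` per
component, and for a positive integer `a` a falling factorial of a natural number, that is, a
binomial coefficient times `(n - 1)!`.
-/

open Finset Polynomial

theorem prod_Icc_natCast_sub_eq_ascPochhammer_eval {R : Type*} [CommRing R] (m : ℕ) (x : R) :
    ∏ j ∈ Icc 1 m, ((j : R) - x) = (ascPochhammer R m).eval (1 - x) := by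
  induction m with
  | zero => simp
  | succ m ih =>
    rw [prod_Icc_succ_top (by lia), ih, ascPochhammer_succ_eval]
    push_cast
    ring

section DiscFactor

variable {K : Type*} [Field K]

/-- The contribution `∏_{j=1}^{n-1} (j - n a) / (n - 1)!` of one boundary component of winding
number `n` to the genus-zero invariant with framing `a`. It is meaningful for `0 < n`, the
subtraction `n - 1` being truncated. -/
def discFactor (n : ℕ) (a : K) : K :=
  (∏ j ∈ Icc 1 (n - 1), ((j : K) - (n : K) * a)) / ((n - 1).factorial : K)

theorem discFactor_eq_neg_one_pow_mul_descPochhammer_eval (n : ℕ) (a : K) :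
    discFactor n a =
      (-1) ^ (n - 1) * ((descPochhammer K (n - 1)).eval (n * a - 1) / (n - 1).factorial) := by
  rw [discFactor, prod_Icc_natCast_sub_eq_ascPochhammer_eval, ← neg_sub,
    ascPochhammer_eval_neg_eq_descPochhammer, mul_div_assoc]

theorem discFactor_one_sub_eq_descPochhammer_eval {n : ℕ} (hn : 0 < n) (a : K) :
    discFactor n (1 - a) =
      (descPochhammer K (n - 1)).eval (n * a - 1) / (n - 1).factorial := by
  have start_eq : (1 : K) - n * (1 - a) = n * a - 1 - (n - 1 : ℕ) + 1 := by
    rw [Nat.cast_pred hn]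
    ring
  rw [discFactor, prod_Icc_natCast_sub_eq_ascPochhammer_eval, start_eq,
    descPochhammer_eval_eq_ascPochhammer]

theorem discFactor_one_sub {n : ℕ} (hn : 0 < n) (a : K) :
    discFactor n (1 - a) = (-1) ^ (n - 1) * discFactor n a := by
  rw [discFactor_one_sub_eq_descPochhammer_eval hn,
    discFactor_eq_neg_one_pow_mul_descPochhammer_eval n a, ← mul_assoc, ← mul_pow,
    neg_one_mul, neg_neg, one_pow, one_mul]

theorem discFactor_one_sub_natCast [CharZero K] {n a : ℕ} (hn : 0 < n) (ha : 0 < a) :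
    discFactor n (1 - (a : K)) = (n * a - 1).choose (n - 1) := by
  rw [discFactor_one_sub_eq_descPochhammer_eval hn, Nat.cast_choose_eq_descPochhammer_div,
    Nat.cast_pred (Nat.mul_pos hn ha), Nat.cast_mul]

theorem prod_discFactor_one_sub {ι : Type*} (s : Finset ι) {n : ι → ℕ} (hn : ∀ i ∈ s, 0 < n i)
    (a : K) :
    ∏ i ∈ s, discFactor (n i) (1 - a) =
      (-1) ^ (∑ i ∈ s, n i - #s) * ∏ i ∈ s, discFactor (n i) a := by
  have sum_pred : ∑ i ∈ s, (n i - 1) = ∑ i ∈ s, n i - #s := by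
    rw [sum_tsub_distrib s hn, card_eq_sum_ones]
  rw [prod_congr rfl fun i hi => discFactor_one_sub (hn i hi) a, prod_mul_distrib,
    prod_pow_eq_pow_sum, sum_pred]

end DiscFactor

theorem genus_zero_invariants_general {K : Type*} [Field K] [CharZero K]
    (h : ℕ) (hh : 1 ≤ h) (n : Fin h → ℕ) (hn : ∀ i, 0 < n i)
    (d : ℕ) (hd : d = ∑ i, n i)
    (C0 : K → K)
    (hC0 : ∀ a : K, C0 a = (a * (1 - a)) ^ (h - 1) *
      (∏ i, discFactor (n i) a) * (d : K) ^ ((h : ℤ) - 3)) :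
    (∀ a : K, C0 (1 - a) = (-1 : K) ^ (d - h) * C0 a) ∧
    (∀ a : ℕ, 0 < a →
      (-1 : K) ^ (d - h) * C0 (a : K) = C0 (1 - (a : K)) ∧
      C0 (1 - (a : K)) = ((a : K) * (1 - (a : K))) ^ (h - 1) *
        (∏ i, ((n i * a - 1).choose (n i - 1) : K)) * (d : K) ^ ((h : ℤ) - 3)) := by
  have reflection (a : K) : C0 (1 - a) = (-1 : K) ^ (d - h) * C0 a := by
    rw [hC0, hC0, prod_discFactor_one_sub univ (fun i _ => hn i), card_fin, ← hd]
    ring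
  refine ⟨reflection, fun a ha => ⟨(reflection a).symm, ?_⟩⟩
  rw [hC0, sub_sub_cancel, mul_comm (1 - (a : K)),
    prod_congr rfl fun i _ => discFactor_one_sub_natCast (hn i) ha]

/-- The genus-zero case of the final Proposition: for the localization expression
`C₀(a) = (a(1-a))^(h-1) · ∏ᵢ (∏_{j=1}^{nᵢ-1} (j - nᵢ a) / (nᵢ-1)!) · d^(h-3)`
(with `d = n₁ + ⋯ + n_h`), one has the symmetry `C₀(1-a) = (-1)^(d-h) C₀(a)` for
all real `a`, and for positive integer `a` the binomial closed form. -/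
theorem genus_zero_invariants (h : ℕ) (hh : 1 ≤ h) (n : Fin h → ℕ) (hn : ∀ i, 0 < n i)
    (d : ℕ) (hd : d = ∑ i, n i)
    (C0 : ℝ → ℝ)
    (hC0 : ∀ a : ℝ, C0 a = (a * (1 - a)) ^ (h - 1) *
      (∏ i, (∏ j ∈ Finset.Icc 1 (n i - 1), ((j : ℝ) - (n i : ℝ) * a)) /
        (Nat.factorial (n i - 1) : ℝ)) * (d : ℝ) ^ ((h : ℤ) - 3)) :
    (∀ a : ℝ, C0 (1 - a) = (-1 : ℝ) ^ (d - h) * C0 a) ∧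
    (∀ a : ℕ, 0 < a →
      (-1 : ℝ) ^ (d - h) * C0 (a : ℝ) = C0 (1 - (a : ℝ)) ∧
      C0 (1 - (a : ℝ)) = ((a : ℝ) * (1 - (a : ℝ))) ^ (h - 1) *
        (∏ i, ((n i * a - 1).choose (n i - 1) : ℝ)) * (d : ℝ) ^ ((h : ℤ) - 3)) :=
  genus_zero_invariants_general h hh n hn d hd C0 hC0
end

section
/- Let R be a commutative ring, let g ≥ 0 be an integer, and let c : ℕ → R satisfy c(0) = 1, c(i) = 0 for all i > g, and, for every integer k with 1 ≤ k ≤ 2g, Σ_{i=0}^{k} (−1)^i c(i) c(k−i) = 0. Then for every λ ∈ R: ( Σ_{i=0}^{g} (−1)^i c(i) λ^{g−i} ) · ( Σ_{i=0}^{g} (−1)^i c(i) (−λ)^{g−i} ) = (−1)^g λ^{2g}. -/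
/-!
Mumford's relation says that the Chern polynomials of `𝔼` and `𝔼^∨` are mutually inverse
polynomials. The top Chern class of a twist by `λ` is the value at `λ` of the reversed Chern
polynomial, and reversal is multiplicative, so `c_g(𝔼^∨(λ)) · c_g(𝔼(λ))` is the value at `λ` of
the reversal `X ^ (2 * g)` of `1`. Finally `c_g(𝔼^∨(-λ)) = (-1)^g c_g(𝔼(λ))`, since
`𝔼^∨(-λ)` is the dual of `𝔼(λ)`.
-/

open Polynomial

section Semiring

variable {R : Type*} [Semiring R]

theorem reflect_sum {ι : Type*} (N : ℕ) (s : Finset ι) (f : ι → R[X]) :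
    (∑ i ∈ s, f i).reflect N = ∑ i ∈ s, (f i).reflect N := by
  ext
  simp only [coeff_reflect, finsetSum_coeff]

/-- The Chern polynomial `c_t(E) = ∑ c_i(E) t^i` of a bundle `E` of rank `g`, for an arbitrary
sequence `c` in place of the Chern classes; terms of `c` beyond `g` are discarded. -/
noncomputable def chernPolynomial (g : ℕ) (c : ℕ → R) : R[X] :=
  ∑ i ∈ Finset.range (g + 1), monomial i (c i)

theorem coeff_chernPolynomial {g : ℕ} {c : ℕ → R} (hc : ∀ i, g < i → c i = 0) (k : ℕ) :
    (chernPolynomial g c).coeff k = c k := by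
  simp only [chernPolynomial, finsetSum_coeff, coeff_monomial, Finset.sum_ite_eq',
    Finset.mem_range, Nat.lt_succ_iff, ite_eq_left_iff, not_le]
  exact fun hk => (hc k hk).symm

theorem natDegree_chernPolynomial_le (g : ℕ) (c : ℕ → R) :
    (chernPolynomial g c).natDegree ≤ g :=
  natDegree_sum_le_of_forall_le _ _ fun i hi =>
    (natDegree_monomial_le (c i)).trans (Finset.mem_range_succ_iff.mp hi)

theorem eval_reflect_chernPolynomial (g : ℕ) (c : ℕ → R) (x : R) :
    ((chernPolynomial g c).reflect g).eval x =
      ∑ i ∈ Finset.range (g + 1), c i * x ^ (g - i) := by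
  have reflect_eq : (chernPolynomial g c).reflect g =
      ∑ i ∈ Finset.range (g + 1), monomial (g - i) (c i) := by
    rw [chernPolynomial, reflect_sum]
    refine Finset.sum_congr rfl fun i hi => ?_
    rw [← C_mul_X_pow_eq_monomial, reflect_C_mul_X_pow,
      revAt_le (Finset.mem_range_succ_iff.mp hi), C_mul_X_pow_eq_monomial]
  simp only [reflect_eq, eval_finsetSum, eval_monomial]

theorem chernPolynomial_mul_chernPolynomial_eq_one {m n : ℕ} {a b : ℕ → R}
    (ha : ∀ i, m < i → a i = 0) (hb : ∀ j, n < j → b j = 0) (hab : a 0 * b 0 = 1)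
    (hrel : ∀ k, 1 ≤ k → k ≤ m + n → ∑ i ∈ Finset.range (k + 1), a i * b (k - i) = 0) :
    chernPolynomial m a * chernPolynomial n b = 1 := by
  have coeff_mul_eq (k : ℕ) : (chernPolynomial m a * chernPolynomial n b).coeff k =
      ∑ i ∈ Finset.range (k + 1), a i * b (k - i) := by
    simp only [coeff_mul, coeff_chernPolynomial ha, coeff_chernPolynomial hb,
      Finset.Nat.sum_antidiagonal_eq_sum_range_succ fun i j => a i * b j]
  ext k
  obtain rfl | hk := Nat.eq_zero_or_pos k
  · simpa [coeff_mul_eq] using hab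
  rw [coeff_one, if_neg hk.ne']
  obtain hle | hlt := le_or_gt k (m + n)
  · rw [coeff_mul_eq, hrel k hk hle]
  · exact coeff_eq_zero_of_natDegree_lt <| (natDegree_mul_le_of_le
      (natDegree_chernPolynomial_le m a) (natDegree_chernPolynomial_le n b)).trans_lt hlt

end Semiring

theorem sum_mul_sum_eq_pow_of_chernPolynomial_mul_eq_one {R : Type*} [CommSemiring R] {m n : ℕ}
    {a b : ℕ → R} (hab : chernPolynomial m a * chernPolynomial n b = 1) (x : R) :
    (∑ i ∈ Finset.range (m + 1), a i * x ^ (m - i)) *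
      (∑ j ∈ Finset.range (n + 1), b j * x ^ (n - j)) = x ^ (m + n) := by
  rw [← eval_reflect_chernPolynomial, ← eval_reflect_chernPolynomial, ← eval_mul,
    ← reflect_mul _ _ (natDegree_chernPolynomial_le m a) (natDegree_chernPolynomial_le n b),
    hab, reflect_one, eval_X_pow]

theorem sum_neg_one_pow_mul_neg_pow {R : Type*} [Ring R] (g : ℕ) (c : ℕ → R) (x : R) :
    ∑ i ∈ Finset.range (g + 1), (-1) ^ i * c i * (-x) ^ (g - i) =
      (-1) ^ g * ∑ i ∈ Finset.range (g + 1), c i * x ^ (g - i) := by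
  rw [Finset.mul_sum]
  refine Finset.sum_congr rfl fun i hi => ?_
  have hig : i ≤ g := Finset.mem_range_succ_iff.mp hi
  calc (-1) ^ i * c i * (-x) ^ (g - i)
      = (-1) ^ i * (c i * (-1) ^ (g - i)) * x ^ (g - i) := by
        rw [neg_pow x]; simp only [mul_assoc]
    _ = (-1) ^ i * ((-1) ^ (g - i) * c i) * x ^ (g - i) := by
        rw [((Commute.neg_one_right (c i)).pow_right (g - i)).eq]
    _ = (-1) ^ g * (c i * x ^ (g - i)) := by
        rw [← pow_mul_pow_sub (-1 : R) hig]; simp only [mul_assoc]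

/-- Mumford's relation `c(𝔼)c(𝔼^∨) = 1` implies
`c_g(𝔼^∨(λ)) · c_g(𝔼^∨(-λ)) = (-1)^g λ^(2g)`, as a purely algebraic identity: if
`c 0 = 1`, `c i = 0` for `i > g` and `∑_{i=0}^{k} (-1)^i c i c (k-i) = 0` for
`1 ≤ k ≤ 2g`, then the stated product identity holds for every `λ`. -/
theorem mumford_relation_identity (R : Type*) [CommRing R] (g : ℕ) (c : ℕ → R)
    (hc0 : c 0 = 1) (hcg : ∀ i, g < i → c i = 0)
    (hrel : ∀ k, 1 ≤ k → k ≤ 2 * g →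
      ∑ i ∈ Finset.range (k + 1), (-1 : R) ^ i * c i * c (k - i) = 0)
    (lam : R) :
    (∑ i ∈ Finset.range (g + 1), (-1 : R) ^ i * c i * lam ^ (g - i)) *
      (∑ i ∈ Finset.range (g + 1), (-1 : R) ^ i * c i * (-lam) ^ (g - i)) =
      (-1 : R) ^ g * lam ^ (2 * g) := by
  have dual_mul : chernPolynomial g (fun i => (-1) ^ i * c i) * chernPolynomial g c = 1 :=
    chernPolynomial_mul_chernPolynomial_eq_one (fun i hi => by rw [hcg i hi, mul_zero]) hcg
      (by simp [hc0]) fun k hk hkg => hrel k hk (by rwa [two_mul])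
  rw [sum_neg_one_pow_mul_neg_pow, mul_left_comm,
    sum_mul_sum_eq_pow_of_chernPolynomial_mul_eq_one dual_mul, two_mul]
end

section
/- Let n ≥ 1. The map B sending a totally real subspace V = A·ℝⁿ of ℂⁿ (A ∈ GL(n,ℂ)) to the matrix A Ā⁻¹ is a well-defined bijection from the set ℛₙ of totally real subspaces of ℂⁿ onto the set 𝑅̃ₙ = {D ∈ GL(n,ℂ) : D D̄ = Iₙ}, where Ā and D̄ denote entrywise complex conjugation and Iₙ is the n×n identity matrix. Concretely: (a) for every A ∈ GL(n,ℂ), the matrix D = A Ā⁻¹ satisfies D D̄ = Iₙ; (b) if A₁·ℝⁿ = A₂·ℝⁿ then A₁ Ā₁⁻¹ = A₂ Ā₂⁻¹, and conversely; (c) for every D ∈ GL(n,ℂ) with D D̄ = Iₙ there exists A ∈ GL(n,ℂ) with A Ā⁻¹ = D. -/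
/-!
For invertible `A`, the matrix `D = A Ā⁻¹` recovers `A·ℝⁿ` as the set of vectors fixed by the
antilinear map `x ↦ D x̄`; this gives the well-definedness and the injectivity of `B`. If
`D D̄ = 1`, that map is an involution, so with `x` it also yields the fixed vectors `x + D x̄` and
`θx + θ̄ D x̄`. When `θ ≠ θ̄`, `x` lies in the span of these two, hence the fixed vectors span the
whole space, and any basis consisting of fixed vectors forms the columns of a matrix `A` with
`D Ā = A`.
-/

open Module Submodule

open scoped Matrix

section CommRing

variable {ι R : Type*} [Fintype ι] [CommRing R] [StarRing R]

/-- The set `A·ℝⁿ`, with the self-adjoint vectors of `ι → R` in the role of `ℝⁿ`. For `R = ℂ` and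
`A` invertible it is a totally real subspace, and every totally real subspace is of this form. -/
def realImage (A : Matrix ι ι R) : Set (ι → R) :=
  A.mulVec '' selfAdjoint (ι → R)

/-- The fixed vectors of the antilinear map `x ↦ D x̄`, the description of `A·ℝⁿ` that
depends on `D = A Ā⁻¹` alone. -/
def conjFixed (D : Matrix ι ι R) : Set (ι → R) :=
  {x | D *ᵥ star x = x}

theorem mem_conjFixed_iff {D : Matrix ι ι R} {x : ι → R} : x ∈ conjFixed D ↔ D *ᵥ star x = x :=
  Iff.rfl

theorem star_mulVec_eq_map_mulVec {κ : Type*} (A : Matrix κ ι R) (x : ι → R) :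
    star (A *ᵥ x) = A.map (starRingEnd R) *ᵥ star x :=
  funext ((starRingEnd R).map_mulVec A x)

theorem col_mem_realImage (A : Matrix ι ι R) (j : ι) : A.col j ∈ realImage A := by
  classical
  refine ⟨Pi.single j 1, ?_, Matrix.mulVec_single_one A j⟩
  rw [SetLike.mem_coe, selfAdjoint.mem_iff, Pi.star_single, star_one]

theorem forall_col_mem_conjFixed_iff {κ : Type*} {A : Matrix ι κ R} {D : Matrix ι ι R} :
    (∀ j, A.col j ∈ conjFixed D) ↔ D * A.map (starRingEnd R) = A := by
  rw [← Matrix.ext_iff, forall_comm]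
  exact forall_congr' fun _ ↦ funext_iff

variable [DecidableEq ι]

/-- The matrix `A Ā⁻¹`, the value at `A·ℝⁿ` of the map `B`. The inverse is the junk value `0`
unless `A` is invertible. -/
noncomputable def conjQuotient (A : Matrix ι ι R) : Matrix ι ι R :=
  A * (A.map (starRingEnd R))⁻¹

theorem isUnit_map_starRingEnd {A : Matrix ι ι R} (hA : IsUnit A) :
    IsUnit (A.map (starRingEnd R)) :=
  hA.map (starRingEnd R).mapMatrix

theorem conjQuotient_eq_iff {A D : Matrix ι ι R} (hA : IsUnit A) :
    conjQuotient A = D ↔ D * A.map (starRingEnd R) = A := by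
  let := (isUnit_map_starRingEnd hA).invertible
  rw [conjQuotient, Matrix.mul_inv_eq_iff_eq_mul_of_invertible, eq_comm]

theorem conjQuotient_mul_map {A : Matrix ι ι R} (hA : IsUnit A) :
    conjQuotient A * A.map (starRingEnd R) = A :=
  (conjQuotient_eq_iff hA).1 rfl

theorem conjQuotient_mul_map_conjQuotient {A : Matrix ι ι R} (hA : IsUnit A) :
    conjQuotient A * (conjQuotient A).map (starRingEnd R) = 1 := by
  have conj_eq : (conjQuotient A).map (starRingEnd R) * A = A.map (starRingEnd R) := by
    simpa [Matrix.map_mul, Function.comp_def] using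
      congrArg (Matrix.map · (starRingEnd R)) (conjQuotient_mul_map hA)
  refine hA.mul_right_cancel ?_
  rw [mul_assoc, conj_eq, conjQuotient_mul_map hA, one_mul]

theorem realImage_eq_conjFixed {A : Matrix ι ι R} (hA : IsUnit A) :
    realImage A = conjFixed (conjQuotient A) := by
  have conj_mulVec (y : ι → R) : conjQuotient A *ᵥ star (A *ᵥ y) = A *ᵥ star y := by
    rw [star_mulVec_eq_map_mulVec, Matrix.mulVec_mulVec, conjQuotient_mul_map hA]
  ext x
  obtain ⟨y, rfl⟩ := Matrix.mulVec_surjective_iff_isUnit.2 hA x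
  have mulVec_inj := Matrix.mulVec_injective_of_isUnit hA
  rw [realImage, mulVec_inj.mem_set_image, mem_conjFixed_iff, conj_mulVec,
    mulVec_inj.eq_iff, SetLike.mem_coe, selfAdjoint.mem_iff]

theorem realImage_eq_iff_conjQuotient_eq {A₁ A₂ : Matrix ι ι R} (h₁ : IsUnit A₁)
    (h₂ : IsUnit A₂) : realImage A₁ = realImage A₂ ↔ conjQuotient A₁ = conjQuotient A₂ := by
  constructor
  · intro h
    rw [conjQuotient_eq_iff h₁, ← forall_col_mem_conjFixed_iff, ← realImage_eq_conjFixed h₂, ← h]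
    exact col_mem_realImage A₁
  · intro h
    rw [realImage_eq_conjFixed h₁, realImage_eq_conjFixed h₂, h]

theorem add_mulVec_star_mem_conjFixed {D : Matrix ι ι R} (hD : D * D.map (starRingEnd R) = 1)
    (x : ι → R) : x + D *ᵥ star x ∈ conjFixed D := by
  rw [mem_conjFixed_iff, star_add, star_mulVec_eq_map_mulVec, star_star,
    Matrix.mulVec_add, Matrix.mulVec_mulVec, hD, Matrix.one_mulVec, add_comm]

theorem span_conjFixed_eq_top {D : Matrix ι ι R} (hD : D * D.map (starRingEnd R) = 1) {θ : R}
    (hθ : IsUnit (θ - star θ)) : span R (conjFixed D) = ⊤ := by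
  refine eq_top_iff'.2 fun x ↦ (smul_mem_iff_of_isUnit _ hθ).1 ?_
  have mem_span (y : ι → R) : y + D *ᵥ star y ∈ span R (conjFixed D) :=
    subset_span (add_mulVec_star_mem_conjFixed hD y)
  have smul_eq : (θ - star θ) • x =
      (θ • x + D *ᵥ star (θ • x)) - star θ • (x + D *ᵥ star x) := by
    rw [star_smul, Matrix.mulVec_smul]
    module
  rw [smul_eq]
  exact sub_mem (mem_span _) (smul_mem _ _ (mem_span x))

end CommRing

section Field

variable {ι K : Type*} [Fintype ι] [DecidableEq ι] [Field K]

theorem exists_isUnit_forall_col_mem {s : Set (ι → K)} (hs : span K s = ⊤) :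
    ∃ A : Matrix ι ι K, IsUnit A ∧ ∀ j, A.col j ∈ s := by
  let v := Basis.ofSpan hs.ge
  let b := v.reindex (v.indexEquiv (Pi.basisFun K ι))
  refine ⟨(Matrix.of b)ᵀ, Matrix.linearIndependent_cols_iff_isUnit.1 b.linearIndependent,
    fun j ↦ Basis.ofSpan_subset hs.ge ?_⟩
  exact ⟨_, (v.reindex_apply _ j).symm⟩

variable [StarRing K]

theorem exists_conjQuotient_eq {θ : K} (hθ : star θ ≠ θ) {D : Matrix ι ι K}
    (hD : D * D.map (starRingEnd K) = 1) : ∃ A, IsUnit A ∧ conjQuotient A = D := by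
  have hspan := span_conjFixed_eq_top hD (sub_ne_zero.2 hθ.symm).isUnit
  obtain ⟨A, hA, hcol⟩ := exists_isUnit_forall_col_mem hspan
  exact ⟨A, hA, (conjQuotient_eq_iff hA).2 (forall_col_mem_conjFixed_iff.1 hcol)⟩

theorem totally_real_matrix_bijection_general {θ : K} (hθ : star θ ≠ θ) :
    (∀ A : Matrix ι ι K, IsUnit A →
      conjQuotient A * (conjQuotient A).map (starRingEnd K) = 1) ∧
    (∀ A₁ A₂ : Matrix ι ι K, IsUnit A₁ → IsUnit A₂ →
      (realImage A₁ = realImage A₂ ↔ conjQuotient A₁ = conjQuotient A₂)) ∧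
    (∀ D : Matrix ι ι K, D * D.map (starRingEnd K) = 1 →
      ∃ A : Matrix ι ι K, IsUnit A ∧ conjQuotient A = D) :=
  ⟨fun _ ↦ conjQuotient_mul_map_conjQuotient, fun _ _ ↦ realImage_eq_iff_conjQuotient_eq,
    fun _ ↦ exists_conjQuotient_eq hθ⟩

end Field

theorem realImage_complex_eq {ι : Type*} [Fintype ι] (A : Matrix ι ι ℂ) :
    realImage A = {x | ∃ y : ι → ℝ, x = A *ᵥ fun i ↦ (y i : ℂ)} := by
  ext x
  constructor
  · rintro ⟨y, hy, rfl⟩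
    refine ⟨fun i ↦ (y i).re, congrArg A.mulVec (funext fun i ↦ ?_)⟩
    exact (Complex.conj_eq_iff_re.1 (congrFun hy i)).symm
  · rintro ⟨y, rfl⟩
    exact ⟨_, funext fun i ↦ Complex.conj_ofReal (y i), rfl⟩

/-- The map `B : A·ℝⁿ ↦ A Ā⁻¹` is a well-defined bijection from totally real
subspaces of `ℂⁿ` onto `{D ∈ GL(n,ℂ) : D D̄ = Iₙ}`. Concretely: (a) `D = A Ā⁻¹`
satisfies `D D̄ = Iₙ`; (b) `A₁·ℝⁿ = A₂·ℝⁿ` iff `A₁ Ā₁⁻¹ = A₂ Ā₂⁻¹`; (c) every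
`D ∈ GL(n,ℂ)` with `D D̄ = Iₙ` is of the form `A Ā⁻¹`. -/
theorem totally_real_matrix_bijection (n : ℕ) (hn : 1 ≤ n) :
    (∀ A : Matrix (Fin n) (Fin n) ℂ, IsUnit A →
      (A * (A.map (starRingEnd ℂ))⁻¹) *
        ((A * (A.map (starRingEnd ℂ))⁻¹).map (starRingEnd ℂ)) = 1) ∧
    (∀ A₁ A₂ : Matrix (Fin n) (Fin n) ℂ, IsUnit A₁ → IsUnit A₂ →
      ({x : Fin n → ℂ | ∃ y : Fin n → ℝ, x = A₁.mulVec (fun i => (y i : ℂ))} =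
          {x : Fin n → ℂ | ∃ y : Fin n → ℝ, x = A₂.mulVec (fun i => (y i : ℂ))} ↔
        A₁ * (A₁.map (starRingEnd ℂ))⁻¹ = A₂ * (A₂.map (starRingEnd ℂ))⁻¹)) ∧
    (∀ D : Matrix (Fin n) (Fin n) ℂ, IsUnit D → D * D.map (starRingEnd ℂ) = 1 →
      ∃ A : Matrix (Fin n) (Fin n) ℂ, IsUnit A ∧ A * (A.map (starRingEnd ℂ))⁻¹ = D) := by
  have hI : star Complex.I ≠ Complex.I := Complex.conj_I.trans_ne (neg_ne_self.2 Complex.I_ne_zero)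
  have ⟨hinvol, hinj, hsurj⟩ := totally_real_matrix_bijection_general (ι := Fin n) hI
  exact ⟨hinvol, by simpa only [realImage_complex_eq, conjQuotient] using hinj, fun D _ ↦ hsurj D⟩
end

section
/- Let n ≥ 1, let A ∈ GL(n,ℂ), and let V = A·ℝⁿ = {A x : x ∈ ℝⁿ} ⊆ ℂⁿ be the associated totally real subspace. Then V is Lagrangian with respect to the standard symplectic form on ℂⁿ ≅ ℝ²ⁿ (equivalently, V is orthogonal to iV with respect to the standard real inner product Re Σᵢ uᵢ conj(vᵢ) on ℂⁿ; equivalently, Im Σᵢ uᵢ conj(vᵢ) = 0 for all u, v ∈ V) if and only if the matrix A Ā⁻¹ is symmetric, i.e. A Ā⁻¹ = (A Ā⁻¹)ᵗ, where Ā denotes the entrywise complex conjugate of A. -/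
/-!
For real vectors `y`, `z`, the Hermitian product of `A y` and `A z` is `zᵀ (Aᴴ A) y`. Hence `A·ℝⁿ`
is Lagrangian iff the Gram matrix `Aᴴ A` has real entries, which for a Hermitian matrix means that
it is symmetric. Since `Aᴴ = Āᵀ`, we have `Aᴴ A = Āᵀ (A Ā⁻¹) Ā`, so `Aᴴ A` is congruent to
`A Ā⁻¹` and one of them is symmetric iff the other is. The argument only uses that conjugation is an
involution of a commutative ring, with the self-adjoint elements in the role of the reals.
-/

open Matrix

theorem isSelfAdjoint_single_one {R n : Type*} [Semiring R] [StarRing R] [DecidableEq n] (i : n) :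
    IsSelfAdjoint (Pi.single i 1 : n → R) := by
  rw [isSelfAdjoint_iff, Pi.star_single, star_one]

theorem isSymm_iff_forall_isSelfAdjoint {R n : Type*} [Star R] {G : Matrix n n R}
    (hG : G.IsHermitian) : G.IsSymm ↔ ∀ i j, IsSelfAdjoint (G i j) := by
  simp only [IsSymm.ext_iff, isSelfAdjoint_iff, hG.apply]

section Isotropic

variable {R m n : Type*} [CommSemiring R] [StarRing R] [Fintype m] [Fintype n]

/-- The image `A·Fⁿ`, where `F` is the set of self-adjoint elements of `R`. For `R = ℂ` this is
`A·ℝⁿ`, a totally real subspace when `A` is invertible. -/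
def selfAdjointImage (A : Matrix m n R) : Set (m → R) :=
  A.mulVec '' {y | IsSelfAdjoint y}

/-- The Hermitian product takes only self-adjoint values on `V`. For `R = ℂ` this says that the
standard symplectic form `Im ∑ i, u i * conj (v i)` vanishes on `V`, so that a real subspace of
dimension `n` in `ℂⁿ` is Lagrangian iff it satisfies this condition. -/
def IsIsotropic (V : Set (m → R)) : Prop :=
  ∀ u ∈ V, ∀ v ∈ V, IsSelfAdjoint (u ⬝ᵥ star v)

theorem isSelfAdjoint_dotProduct {u v : n → R} (hu : IsSelfAdjoint u) (hv : IsSelfAdjoint v) :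
    IsSelfAdjoint (u ⬝ᵥ v) :=
  isSelfAdjoint_sum _ fun i _ => (hu.apply i).mul (hv.apply i)

theorem forall_isSelfAdjoint_dotProduct_mulVec_iff {G : Matrix m n R} :
    (∀ z, IsSelfAdjoint z → ∀ y, IsSelfAdjoint y → IsSelfAdjoint (z ⬝ᵥ G *ᵥ y)) ↔
      ∀ i j, IsSelfAdjoint (G i j) := by
  classical
  constructor
  · intro h i j
    simpa only [mulVec_single_one, single_one_dotProduct, col_apply] using
      h _ (isSelfAdjoint_single_one i) _ (isSelfAdjoint_single_one j)
  · intro hG z hz y hy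
    have hGy : IsSelfAdjoint (G *ᵥ y) :=
      Pi.isSelfAdjoint.2 fun i => isSelfAdjoint_dotProduct (Pi.isSelfAdjoint.2 (hG i)) hy
    exact isSelfAdjoint_dotProduct hz hGy

theorem mulVec_dotProduct_star_mulVec (A : Matrix m n R) (y z : n → R) :
    A *ᵥ y ⬝ᵥ star (A *ᵥ z) = star z ⬝ᵥ (Aᴴ * A) *ᵥ y := by
  rw [dotProduct_comm, star_mulVec, ← dotProduct_mulVec, mulVec_mulVec]

theorem isIsotropic_selfAdjointImage_iff {A : Matrix m n R} :
    IsIsotropic (selfAdjointImage A) ↔ (Aᴴ * A).IsSymm := by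
  rw [isSymm_iff_forall_isSelfAdjoint (isHermitian_conjTranspose_mul_self A),
    ← forall_isSelfAdjoint_dotProduct_mulVec_iff]
  simp only [IsIsotropic, selfAdjointImage, Set.forall_mem_image, Set.mem_ofPred_eq,
    mulVec_dotProduct_star_mulVec]
  exact ⟨fun h z hz y hy => by simpa only [hz.star_eq] using h hy hz,
    fun h y hy z hz => by simpa only [hz.star_eq] using h z hz y hy⟩

end Isotropic

section Congruence

variable {R n : Type*} [Fintype n] [DecidableEq n]

theorem isSymm_transpose_mul_mul_iff [CommSemiring R] {P S : Matrix n n R} (hP : IsUnit P) :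
    (Pᵀ * S * P).IsSymm ↔ S.IsSymm := by
  have hPt : IsUnit Pᵀ := (isUnit_transpose P).2 hP
  rw [IsSymm, transpose_mul, transpose_mul, transpose_transpose, ← mul_assoc, hP.mul_left_inj,
    hPt.mul_right_inj, IsSymm]

theorem isSymm_mul_inv_iff [CommRing R] {A B : Matrix n n R} (hB : IsUnit B) :
    (A * B⁻¹).IsSymm ↔ (Bᵀ * A).IsSymm := by
  have hdet : IsUnit B.det := (isUnit_iff_isUnit_det B).1 hB
  rw [← isSymm_transpose_mul_mul_iff hB, mul_assoc, nonsing_inv_mul_cancel_right B A hdet]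

end Congruence

theorem lagrangian_iff_symmetric_general {R n : Type*} [CommRing R] [StarRing R] [Fintype n]
    [DecidableEq n] {A : Matrix n n R} (hA : IsUnit A) :
    IsIsotropic (selfAdjointImage A) ↔ (A * (A.map (starRingEnd R))⁻¹).IsSymm := by
  have hconj : IsUnit (A.map (starRingEnd R)) := hA.map (starRingEnd R).mapMatrix
  have htranspose : (A.map (starRingEnd R))ᵀ = Aᴴ := rfl
  rw [isIsotropic_selfAdjointImage_iff, isSymm_mul_inv_iff hconj, htranspose]

section Complex

variable {m n : Type*}

theorem isSelfAdjoint_iff_exists_ofReal {v : n → ℂ} :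
    IsSelfAdjoint v ↔ ∃ y : n → ℝ, v = fun i => (y i : ℂ) :=
  calc
    IsSelfAdjoint v ↔ ∀ i, ∃ r : ℝ, v i = r :=
      Pi.isSelfAdjoint.trans <| forall_congr' fun _ => Complex.conj_eq_iff_real
    _ ↔ ∃ y : n → ℝ, ∀ i, v i = y i := Classical.skolem
    _ ↔ ∃ y : n → ℝ, v = fun i => (y i : ℂ) := by simp only [funext_iff]

theorem selfAdjointImage_eq_setOf_ofReal [Fintype n] (A : Matrix m n ℂ) :
    selfAdjointImage A = {x | ∃ y : n → ℝ, x = A *ᵥ fun i => (y i : ℂ)} := by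
  ext x
  simp only [selfAdjointImage, isSelfAdjoint_iff_exists_ofReal, Set.mem_image, Set.mem_ofPred_eq]
  constructor
  · rintro ⟨_, ⟨y, rfl⟩, rfl⟩
    exact ⟨y, rfl⟩
  · rintro ⟨y, rfl⟩
    exact ⟨_, ⟨y, rfl⟩, rfl⟩

theorem isIsotropic_iff_im_eq_zero [Fintype n] {V : Set (n → ℂ)} :
    IsIsotropic V ↔ ∀ u ∈ V, ∀ v ∈ V, (∑ i, u i * (starRingEnd ℂ) (v i)).im = 0 := by
  simp only [← Complex.conj_eq_iff_im]
  rfl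

end Complex

/-- Under the bijection `A·ℝⁿ ↦ A Ā⁻¹`, Lagrangian subspaces correspond to symmetric
matrices: the totally real subspace `V = A·ℝⁿ` is Lagrangian for the standard
symplectic form on `ℂⁿ` (i.e. `Im ∑ᵢ uᵢ conj(vᵢ) = 0` for all `u, v ∈ V`) iff
`A Ā⁻¹` is symmetric. -/
theorem lagrangian_iff_symmetric (n : ℕ) (hn : 1 ≤ n)
    (A : Matrix (Fin n) (Fin n) ℂ) (hA : IsUnit A) :
    (∀ u ∈ {x : Fin n → ℂ | ∃ y : Fin n → ℝ, x = A.mulVec (fun i => (y i : ℂ))},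
     ∀ v ∈ {x : Fin n → ℂ | ∃ y : Fin n → ℝ, x = A.mulVec (fun i => (y i : ℂ))},
      (∑ i, u i * (starRingEnd ℂ) (v i)).im = 0) ↔
    A * (A.map (starRingEnd ℂ))⁻¹ = (A * (A.map (starRingEnd ℂ))⁻¹).transpose := by
  rw [← isIsotropic_iff_im_eq_zero, ← selfAdjointImage_eq_setOf_ofReal, eq_comm]
  exact lagrangian_iff_symmetric_general hA
end
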